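/- arXiv:0901.0455 — 3 statements merged into one kernel-verified Lean document; each statement's English description precedes it below -/
import Mathlib

section
/- For every θ ∈ Θ and every δ ∈ ℝ^p, the limit lim_{s→∞} (c(θ + sδ) − c(θ))/s exists in (−∞, ∞] and equals the support function value σ_K(δ) = sup_{x ∈ K} ⟨x, δ⟩, where K is the convex support of ν (equivalently, σ_K(δ) is the ν-essential supremum of x ↦ ⟨x, δ⟩). -/
open MeasureTheory Real Filter Topology Set
open scoped RealInnerProductSpace ENNReal

/-- The normalizing integral (Laplace transform) `∫ exp⟪x, θ⟫ dν(x)` as an `ℝ≥0∞`-valued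
lower integral; `θ` lies in the natural parameter space iff this is finite. -/
noncomputable def partitionFn {p : ℕ} (ν : Measure (EuclideanSpace ℝ (Fin p)))
    (θ : EuclideanSpace ℝ (Fin p)) : ℝ≥0∞ :=
  ∫⁻ x, ENNReal.ofReal (Real.exp ⟪x, θ⟫) ∂ν

/-- The cumulant function `c(θ) = log ∫ exp⟪x, θ⟫ dν(x)` (real-valued; meaningful on the
natural parameter space `{θ | partitionFn ν θ < ⊤}`). -/
noncomputable def cumulant {p : ℕ} (ν : Measure (EuclideanSpace ℝ (Fin p)))
    (θ : EuclideanSpace ℝ (Fin p)) : ℝ :=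
  Real.log (partitionFn ν θ).toReal

/-- The extended-real-valued cumulant function, equal to `⊤` off the natural parameter space. -/
noncomputable def ecumulant {p : ℕ} (ν : Measure (EuclideanSpace ℝ (Fin p)))
    (θ : EuclideanSpace ℝ (Fin p)) : EReal :=
  if partitionFn ν θ = ⊤ then ⊤ else ((cumulant ν θ : ℝ) : EReal)

/-- The member of the full exponential family generated by `ν` with natural parameter `θ`:
the measure with density `x ↦ exp(⟪x, θ⟫ − c(θ))` with respect to `ν`. -/
noncomputable def expFam {p : ℕ} (ν : Measure (EuclideanSpace ℝ (Fin p)))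
    (θ : EuclideanSpace ℝ (Fin p)) : Measure (EuclideanSpace ℝ (Fin p)) :=
  ν.withDensity fun x => ENNReal.ofReal (Real.exp (⟪x, θ⟫ - cumulant ν θ))

/-- `K` is the convex support of `ν`: the smallest closed convex set of full `ν`-measure. -/
def IsConvexSupport {p : ℕ} (ν : Measure (EuclideanSpace ℝ (Fin p)))
    (K : Set (EuclideanSpace ℝ (Fin p))) : Prop :=
  IsClosed K ∧ Convex ℝ K ∧ ν Kᶜ = 0 ∧
    ∀ C : Set (EuclideanSpace ℝ (Fin p)), IsClosed C → Convex ℝ C → ν Cᶜ = 0 → K ⊆ C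

/-!
Write `L f = log ∫ exp f dν`. If `g ≤ r` almost everywhere, then `L (f + s g) ≤ L f + s r`; if
`{r < g}` has positive measure, then restricting the integral to this set gives
`L (f + s g) ≥ k + s r` with `k` finite and independent of `s`. After division by `s` the constants
vanish, so the slope of `s ↦ L (f + s g)` at infinity is the essential supremum of `g`. For `g`
convex and lower semicontinuous, the sublevel set `{g ≤ essSup g}` is closed and convex and has full
measure, hence contains the convex support `K`; so `essSup g` is the supremum of `g` over `K`.
-/

theorem tendsto_add_mul_sub_div_atTop (k r c : ℝ) :
    Tendsto (fun s : ℝ ↦ ((k : EReal) + (s * r : ℝ) - c) / s) atTop (𝓝 (r : EReal)) := by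
  have hreal : Tendsto (fun s : ℝ ↦ r + (k - c) / s) atTop (𝓝 r) := by
    simpa using (tendsto_const_nhds (x := r)).add
      ((tendsto_const_nhds (x := k - c)).div_atTop tendsto_id)
  refine (EReal.tendsto_coe.2 hreal).congr' ?_
  filter_upwards [eventually_ne_atTop 0] with s hs
  rw [← EReal.coe_add, ← EReal.coe_sub, ← EReal.coe_div, EReal.coe_eq_coe_iff]
  field_simp
  ring

/-- The log-partition functional `f ↦ log ∫ exp f dν`, with values in the extended reals: it is `⊤`
where the integral diverges and `⊥` where it vanishes. The cumulant function is its restriction to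
the linear forms `f = ⟪·, θ⟫`. -/
noncomputable def logIntegralExp {α : Type*} [MeasurableSpace α] (ν : Measure α) (f : α → ℝ) :
    EReal :=
  ENNReal.log (∫⁻ x, ENNReal.ofReal (Real.exp (f x)) ∂ν)

section LogIntegralExp

variable {α : Type*} [MeasurableSpace α] {ν : Measure α} {f g : α → ℝ} {s : ℝ}

theorem logIntegralExp_ne_bot (hν : ν ≠ 0) (hf : AEMeasurable f ν) : logIntegralExp ν f ≠ ⊥ := by
  rw [logIntegralExp, Ne, ENNReal.log_eq_bot_iff, lintegral_eq_zero_iff' (by fun_prop)]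
  intro h
  have hfalse : ∀ᵐ _ ∂ν, False := h.mono fun x hx ↦ (ENNReal.ofReal_pos.2 (exp_pos (f x))).ne' hx
  exact hν (by simpa using hfalse)

theorem logIntegralExp_mono_ae (h : f ≤ᵐ[ν] g) : logIntegralExp ν f ≤ logIntegralExp ν g :=
  ENNReal.log_monotone <| lintegral_mono_ae <|
    h.mono fun _ hx ↦ ENNReal.ofReal_le_ofReal (exp_le_exp.2 hx)

theorem logIntegralExp_restrict_le (A : Set α) :
    logIntegralExp (ν.restrict A) f ≤ logIntegralExp ν f :=
  ENNReal.log_monotone (setLIntegral_le_lintegral A _)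

theorem logIntegralExp_add_const (c : ℝ) :
    logIntegralExp ν (fun x ↦ f x + c) = logIntegralExp ν f + c := by
  simp only [logIntegralExp, exp_add, ENNReal.ofReal_mul (exp_pos _).le]
  rw [lintegral_mul_const' _ _ ENNReal.ofReal_ne_top, ENNReal.log_mul_add,
    ENNReal.log_ofReal_of_pos (exp_pos c), log_exp]

theorem logIntegralExp_add_mul_le {r : ℝ} (hs : 0 ≤ s) (hg : ∀ᵐ x ∂ν, g x ≤ r) :
    logIntegralExp ν (fun x ↦ f x + s * g x) ≤ logIntegralExp ν f + (s * r : ℝ) := by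
  rw [← logIntegralExp_add_const]
  refine logIntegralExp_mono_ae ?_
  filter_upwards [hg] with x hx
  gcongr

theorem logIntegralExp_restrict_add_le {r : ℝ} (hs : 0 ≤ s) (hg : AEMeasurable g ν) :
    logIntegralExp (ν.restrict {x | r < g x}) f + (s * r : ℝ) ≤
      logIntegralExp ν (fun x ↦ f x + s * g x) := by
  rw [← logIntegralExp_add_const]
  refine (logIntegralExp_mono_ae ?_).trans (logIntegralExp_restrict_le {x | r < g x})
  filter_upwards [ae_restrict_mem₀ (nullMeasurableSet_lt aemeasurable_const hg)] with x hx
  gcongr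

theorem eventually_logIntegralExp_sub_div_lt_of_essSup_lt (hf : logIntegralExp ν f ≠ ⊤) (c : ℝ)
    {a : EReal} (ha : essSup (fun x ↦ (g x : EReal)) ν < a) :
    ∀ᶠ s : ℝ in atTop, (logIntegralExp ν (fun x ↦ f x + s * g x) - c) / s < a := by
  obtain ⟨r, hr, hra⟩ := EReal.lt_iff_exists_real_btwn.1 ha
  obtain ⟨k, hk, -⟩ := EReal.lt_iff_exists_real_btwn.1 hf.lt_top
  have hgr : ∀ᵐ x ∂ν, g x ≤ r :=
    (ae_lt_of_essSup_lt hr).mono fun x hx ↦ (EReal.coe_lt_coe_iff.1 hx).le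
  filter_upwards [eventually_ge_atTop 0,
    (tendsto_add_mul_sub_div_atTop k r c).eventually_lt_const hra] with s hs hsa
  refine lt_of_le_of_lt (EReal.div_le_div_right_of_nonneg (EReal.coe_nonneg.2 hs) ?_) hsa
  have hle : logIntegralExp ν (fun x ↦ f x + s * g x) ≤ k + (s * r : ℝ) :=
    (logIntegralExp_add_mul_le hs hgr).trans (by gcongr)
  exact EReal.sub_le_sub hle le_rfl

theorem eventually_lt_logIntegralExp_sub_div_of_lt_essSup (hfm : AEMeasurable f ν)
    (hg : AEMeasurable g ν) (hf : logIntegralExp ν f ≠ ⊤) (c : ℝ) {a : EReal}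
    (ha : a < essSup (fun x ↦ (g x : EReal)) ν) :
    ∀ᶠ s : ℝ in atTop, a < (logIntegralExp ν (fun x ↦ f x + s * g x) - c) / s := by
  obtain ⟨r, har, hr⟩ := EReal.lt_iff_exists_real_btwn.1 ha
  have hA : ν {x | r < g x} ≠ 0 := fun h ↦ hr.not_ge <| essSup_le_of_ae_le _ <|
    (measure_eq_zero_iff_ae_notMem.1 h).mono fun x hx ↦ EReal.coe_le_coe_iff.2 (not_lt.1 hx)
  obtain ⟨k, hk⟩ : ∃ k : ℝ, (k : EReal) = logIntegralExp (ν.restrict {x | r < g x}) f :=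
    ⟨_, EReal.coe_toReal (ne_top_of_le_ne_top hf (logIntegralExp_restrict_le _))
      (logIntegralExp_ne_bot (Measure.restrict_eq_zero.not.2 hA) hfm.restrict)⟩
  filter_upwards [eventually_ge_atTop 0,
    (tendsto_add_mul_sub_div_atTop k r c).eventually_const_lt har] with s hs hsa
  refine lt_of_lt_of_le hsa (EReal.div_le_div_right_of_nonneg (EReal.coe_nonneg.2 hs) ?_)
  rw [hk]
  exact EReal.sub_le_sub (logIntegralExp_restrict_add_le hs hg) le_rfl

theorem tendsto_logIntegralExp_sub_div_essSup (hfm : AEMeasurable f ν) (hg : AEMeasurable g ν)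
    (hf : logIntegralExp ν f ≠ ⊤) (c : ℝ) :
    Tendsto (fun s : ℝ ↦ (logIntegralExp ν (fun x ↦ f x + s * g x) - c) / s) atTop
      (𝓝 (essSup (fun x ↦ (g x : EReal)) ν)) :=
  tendsto_order.2 ⟨fun _ ↦ eventually_lt_logIntegralExp_sub_div_of_lt_essSup hfm hg hf c,
    fun _ ↦ eventually_logIntegralExp_sub_div_lt_of_essSup_lt hf c⟩

end LogIntegralExp

section ConvexSupport

variable {E : Type*} [AddCommMonoid E] [Module ℝ E] [TopologicalSpace E] [MeasurableSpace E]
  {ν : Measure E} {K : Set E}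

theorem essSup_eq_biSup_of_quasiconvexOn {β : Type*} [CompleteLinearOrder β] [TopologicalSpace β]
    [OrderTopology β] [FirstCountableTopology β]
    (hK : IsLeast {C : Set E | IsClosed C ∧ Convex ℝ C ∧ ∀ᵐ x ∂ν, x ∈ C} K) {g : E → β}
    (hg : LowerSemicontinuous g) (hgc : QuasiconvexOn ℝ univ g) :
    essSup g ν = ⨆ x ∈ K, g x := by
  apply le_antisymm
  · exact essSup_le_of_ae_le _ (hK.1.2.2.mono fun x hx ↦ le_iSup₂ (f := fun x _ ↦ g x) x hx)
  · have hsub : K ⊆ {x | g x ≤ essSup g ν} :=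
      hK.2 ⟨hg.isClosed_preimage _, by simpa using hgc (essSup g ν), ae_le_essSup⟩
    exact iSup₂_le hsub

theorem essSup_strongDual_eq_biSup
    (hK : IsLeast {C : Set E | IsClosed C ∧ Convex ℝ C ∧ ∀ᵐ x ∂ν, x ∈ C} K) (δ : StrongDual ℝ E) :
    essSup (fun x ↦ (δ x : EReal)) ν = ⨆ x ∈ K, (δ x : EReal) :=
  essSup_eq_biSup_of_quasiconvexOn hK
    (continuous_coe_real_ereal.comp δ.continuous).lowerSemicontinuous
    ((δ.toLinearMap.convexOn convex_univ).quasiconvexOn.monotone_comp (g := Real.toEReal)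
      EReal.coe_strictMono.monotone)

theorem cumulant_recession_limit_general [OpensMeasurableSpace E] (hν : ν ≠ 0)
    (hK : IsLeast {C : Set E | IsClosed C ∧ Convex ℝ C ∧ ∀ᵐ x ∂ν, x ∈ C} K)
    {θ : StrongDual ℝ E} (hθ : logIntegralExp ν θ ≠ ⊤) (δ : StrongDual ℝ E) :
    Tendsto (fun s : ℝ ↦ (logIntegralExp ν ⇑(θ + s • δ) - logIntegralExp ν θ) / s) atTop
      (𝓝 (⨆ x ∈ K, (δ x : EReal))) := by
  have hmeas (η : StrongDual ℝ E) : AEMeasurable η ν := η.continuous.measurable.aemeasurable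
  obtain ⟨c, hc⟩ : ∃ c : ℝ, (c : EReal) = logIntegralExp ν θ :=
    ⟨_, EReal.coe_toReal hθ (logIntegralExp_ne_bot hν (hmeas θ))⟩
  rw [← essSup_strongDual_eq_biSup hK δ, ← hc]
  exact tendsto_logIntegralExp_sub_div_essSup (hmeas θ) (hmeas δ) hθ c

end ConvexSupport

section Euclidean

variable {p : ℕ} {ν : Measure (EuclideanSpace ℝ (Fin p))}

theorem IsConvexSupport.isLeast {K : Set (EuclideanSpace ℝ (Fin p))} (hK : IsConvexSupport ν K) :
    IsLeast {C | IsClosed C ∧ Convex ℝ C ∧ ∀ᵐ x ∂ν, x ∈ C} K :=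
  ⟨⟨hK.1, hK.2.1, hK.2.2.1⟩, fun C hC ↦ hK.2.2.2 C hC.1 hC.2.1 hC.2.2⟩

theorem log_partitionFn (θ : EuclideanSpace ℝ (Fin p)) :
    ENNReal.log (partitionFn ν θ) = logIntegralExp ν (innerSL ℝ θ) := by
  simp only [partitionFn, logIntegralExp, innerSL_apply_apply, real_inner_comm]

theorem ecumulant_eq_logIntegralExp (hν : ν ≠ 0) (θ : EuclideanSpace ℝ (Fin p)) :
    ecumulant ν θ = logIntegralExp ν (innerSL ℝ θ) := by
  have hbot := logIntegralExp_ne_bot hν (innerSL ℝ θ).continuous.measurable.aemeasurable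
  rw [← log_partitionFn, Ne, ENNReal.log_eq_bot_iff] at hbot
  rw [← log_partitionFn, ecumulant, cumulant]
  split_ifs with htop
  · rw [htop, ENNReal.log_top]
  · rw [ENNReal.log_pos_real hbot htop]

end Euclidean

/-- For every `θ` in the natural parameter space and every direction `δ`, the quotient
`(c(θ + sδ) − c(θ))/s` (interpreted as `+∞` when `c(θ + sδ) = ∞`) converges as `s → ∞` to the
support function value `σ_K(δ) = sup_{x ∈ K} ⟪x, δ⟫` of the convex support `K`. -/
theorem cumulant_recession_limit {p : ℕ} (hp : 0 < p)
    (ν : Measure (EuclideanSpace ℝ (Fin p))) [SigmaFinite ν] (hν : ν ≠ 0)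
    (hΘ : {θ : EuclideanSpace ℝ (Fin p) | partitionFn ν θ < ⊤}.Nonempty)
    (K : Set (EuclideanSpace ℝ (Fin p))) (hK : IsConvexSupport ν K) :
    ∀ θ : EuclideanSpace ℝ (Fin p), partitionFn ν θ < ⊤ →
      ∀ δ : EuclideanSpace ℝ (Fin p),
        Tendsto (fun s : ℝ => (ecumulant ν (θ + s • δ) - ecumulant ν θ) / (s : EReal))
          atTop (𝓝 (⨆ x ∈ K, ((⟪x, δ⟫ : ℝ) : EReal))) := by
  intro θ hθ δ
  have hθ' : logIntegralExp ν (innerSL ℝ θ) ≠ ⊤ := by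
    simpa only [← log_partitionFn, Ne, ENNReal.log_eq_top_iff] using hθ.ne
  simpa only [ecumulant_eq_logIntegralExp hν, map_add, map_smul, innerSL_apply_apply,
    real_inner_comm] using cumulant_recession_limit_general hν hK.isLeast hθ' (innerSL ℝ δ)
end

section
/- Let y ∈ K, where K is the convex support. The supremum of the log likelihood l(θ) = ⟨y, θ⟩ − c(θ) over θ ∈ Θ is attained at some point of Θ if and only if every direction of recession is a direction of constancy, i.e. if and only if every δ ∈ ℝ^p such that ⟨x − y, δ⟩ ≤ 0 for ν-almost every x in fact satisfies ⟨x − y, δ⟩ = 0 for ν-almost every x. -/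
open MeasureTheory Real Filter Topology Set
open scoped RealInnerProductSpace ENNReal

/-!
The log likelihood is `-log (Λ θ)` with `Λ θ = ∫ exp ⟪x - y, θ⟫ dν(x)`, so that maximum likelihood
estimates are minimisers of `Λ`. Adding a direction of recession to `θ` decreases the integrand
pointwise, so at a minimiser the integrand cannot change, and the direction is one of constancy.
Conversely, `Λ` is lower semicontinuous, and Fatou's lemma shows that it tends to `∞` in every
asymptotic direction which is not a direction of recession. If all directions of recession are
directions of constancy, the sublevel sets of `Λ` are therefore compact modulo the space of
directions of constancy, along which `Λ` is invariant, and `Λ` attains its minimum.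
-/

section LowerSemicontinuous

variable {E β : Type*} [NormedAddCommGroup E] [InnerProductSpace ℝ E]

theorem isBounded_orthogonal_inter [FiniteDimensional ℝ E] {N : Submodule ℝ E} {s : Set E}
    (hs : asymptoticCone ℝ s ⊆ N) : Bornology.IsBounded ((Nᗮ : Set E) ∩ s) := by
  refine isBounded_iff_asymptoticCone_subset_singleton.2 fun δ hδ => ?_
  have hδ_orth : δ ∈ asymptoticCone ℝ (Nᗮ : Set E) := asymptoticCone_mono inter_subset_left hδ
  rw [asymptoticCone_submodule, N.isClosed_orthogonal.closure_eq] at hδ_orth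
  exact N.orthogonal_disjoint.le_bot ⟨hs (asymptoticCone_mono inter_subset_right hδ), hδ_orth⟩

theorem exists_forall_le_of_asymptoticCone_subset [FiniteDimensional ℝ E] [LinearOrder β]
    {f : E → β} (hf : LowerSemicontinuous f) {N : Submodule ℝ E}
    (hN : ∀ θ, ∀ δ ∈ N, f (θ + δ) = f θ) {θ₀ : E}
    (hcone : asymptoticCone ℝ {θ | f θ ≤ f θ₀} ⊆ N) : ∃ θ, ∀ η, f θ ≤ f η := by
  have exists_orthogonal (θ : E) : ∃ η ∈ Nᗮ, f η = f θ := by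
    obtain ⟨δ, hδ, η, hη, rfl⟩ := N.exists_add_mem_mem_orthogonal θ
    exact ⟨η, hη, by rw [add_comm, hN η δ hδ]⟩
  have hcompact : IsCompact ((Nᗮ : Set E) ∩ {θ | f θ ≤ f θ₀}) :=
    Metric.isCompact_of_isClosed_isBounded
      (N.isClosed_orthogonal.inter (hf.isClosed_preimage (f θ₀))) (isBounded_orthogonal_inter hcone)
  have hnonempty : ((Nᗮ : Set E) ∩ {θ | f θ ≤ f θ₀}).Nonempty :=
    (exists_orthogonal θ₀).imp fun _ hη => ⟨hη.1, hη.2.le⟩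
  obtain ⟨θ, ⟨-, hθ⟩, hmin⟩ := (hf.lowerSemicontinuousOn _).exists_isMinOn hnonempty hcompact
  refine ⟨θ, fun η => ?_⟩
  obtain hη | hη := le_total (f η) (f θ₀)
  · obtain ⟨ζ, hζ, hfζ⟩ := exists_orthogonal η
    exact (hmin ⟨hζ, hfζ.trans_le hη⟩).trans_eq hfζ
  · exact hθ.trans hη

end LowerSemicontinuous

section LaplaceTransform

variable {Ω E : Type*} [MeasurableSpace Ω] [NormedAddCommGroup E] [InnerProductSpace ℝ E]
  {T : Ω → E} {μ : Measure Ω}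

/-- The Laplace transform `θ ↦ ∫ exp ⟪T, θ⟫ dμ` of the distribution of a statistic `T` under `μ`.
It takes values in `ℝ≥0∞` so that it makes sense off the natural parameter space. -/
noncomputable def laplaceTransform (T : Ω → E) (μ : Measure Ω) (θ : E) : ℝ≥0∞ :=
  ∫⁻ ω, ENNReal.ofReal (exp ⟪T ω, θ⟫) ∂μ

/-- The log likelihood `⟪y, θ⟫ - log ∫ exp ⟪T, θ⟫ dμ` of the exponential family with natural
statistic `T` and base measure `μ`, when `T` is observed to be `y`. It is only meaningful where the
Laplace transform is finite: elsewhere the logarithm takes the junk value `0`. -/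
noncomputable def logLikelihood (T : Ω → E) (μ : Measure Ω) (y θ : E) : ℝ :=
  ⟪y, θ⟫ - log (laplaceTransform T μ θ).toReal

/-- The space of vectors orthogonal to `T` almost everywhere. When `T` is centred at the observed
value of the natural statistic, these are the directions of constancy of the log likelihood. -/
def constancySpace (T : Ω → E) (μ : Measure Ω) : Submodule ℝ E where
  carrier := {δ | ∀ᵐ ω ∂μ, ⟪T ω, δ⟫ = 0}
  add_mem' {δ ε} hδ hε := by
    rw [mem_ofPred_eq] at hδ hε ⊢
    filter_upwards [hδ, hε] with ω hωδ hωε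
    rw [inner_add_right, hωδ, hωε, add_zero]
  zero_mem' := ae_of_all μ fun ω => inner_zero_right (T ω)
  smul_mem' c δ hδ := by
    rw [mem_ofPred_eq] at hδ ⊢
    filter_upwards [hδ] with ω hω
    rw [inner_smul_right, hω, mul_zero]

theorem aemeasurable_ofReal_exp_inner (hT : AEStronglyMeasurable T μ) (θ : E) :
    AEMeasurable (fun ω => ENNReal.ofReal (exp ⟪T ω, θ⟫)) μ :=
  (hT.inner aestronglyMeasurable_const).aemeasurable.exp.ennreal_ofReal

theorem laplaceTransform_ne_zero (hμ : μ ≠ 0) (hT : AEStronglyMeasurable T μ) (θ : E) :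
    laplaceTransform T μ θ ≠ 0 := by
  have := ae_neBot.2 hμ
  intro h
  obtain ⟨ω, hω⟩ :=
    ((lintegral_eq_zero_iff' (aemeasurable_ofReal_exp_inner hT θ)).1 h).exists
  exact (ENNReal.ofReal_pos.2 (exp_pos _)).ne' hω

theorem laplaceTransform_add_of_mem_constancySpace (θ : E) {δ : E} (hδ : δ ∈ constancySpace T μ) :
    laplaceTransform T μ (θ + δ) = laplaceTransform T μ θ := by
  refine lintegral_congr_ae ?_
  filter_upwards [hδ] with ω hω
  rw [inner_add_right, hω, add_zero]

theorem mem_constancySpace_of_laplaceTransform_le_add (hT : AEStronglyMeasurable T μ) {θ δ : E}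
    (hθ : laplaceTransform T μ θ < ⊤) (hδ : ∀ᵐ ω ∂μ, ⟪T ω, δ⟫ ≤ 0)
    (hle : laplaceTransform T μ θ ≤ laplaceTransform T μ (θ + δ)) : δ ∈ constancySpace T μ := by
  have hmono : ∀ᵐ ω ∂μ,
      ENNReal.ofReal (exp ⟪T ω, θ + δ⟫) ≤ ENNReal.ofReal (exp ⟪T ω, θ⟫) := by
    filter_upwards [hδ] with ω hω
    rw [inner_add_right]
    gcongr
    exact add_le_of_nonpos_right hω
  have heq := ae_eq_of_ae_le_of_lintegral_le hmono ((lintegral_mono_ae hmono).trans_lt hθ).ne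
    (aemeasurable_ofReal_exp_inner hT θ) hle
  filter_upwards [heq] with ω hω
  rwa [ENNReal.ofReal_eq_ofReal_iff (exp_nonneg _) (exp_nonneg _), exp_eq_exp,
    inner_add_right, add_eq_left] at hω

theorem lowerSemicontinuous_laplaceTransform (hT : AEStronglyMeasurable T μ) :
    LowerSemicontinuous (laplaceTransform T μ) := by
  refine lowerSemicontinuous_iff_le_liminf.2 fun θ => ?_
  have hcont (ω : Ω) : Continuous fun η : E => ENNReal.ofReal (exp ⟪T ω, η⟫) :=
    ENNReal.continuous_ofReal.comp (by fun_prop)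
  calc laplaceTransform T μ θ
      = ∫⁻ ω, liminf (fun η => ENNReal.ofReal (exp ⟪T ω, η⟫)) (𝓝 θ) ∂μ :=
        lintegral_congr fun ω => ((hcont ω).tendsto θ).liminf_eq.symm
    _ ≤ liminf (laplaceTransform T μ) (𝓝 θ) :=
        lintegral_liminf_le' (aemeasurable_ofReal_exp_inner hT)

theorem tendsto_ofReal_exp_inner_asymptoticNhds {x δ : E} (hx : 0 < ⟪x, δ⟫) :
    Tendsto (fun θ => ENNReal.ofReal (exp ⟪x, θ⟫)) (AffineSpace.asymptoticNhds ℝ E δ) (𝓝 ⊤) := by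
  refine ENNReal.tendsto_ofReal_atTop.comp (tendsto_exp_atTop.comp ?_)
  rw [AffineSpace.asymptoticNhds_eq_smul, ← map₂_smul, ← map_prod_eq_map₂, tendsto_map'_iff]
  simp only [Function.comp_def, inner_smul_right]
  exact tendsto_fst.atTop_mul_pos hx (tendsto_const_nhds.inner tendsto_snd)

theorem tendsto_laplaceTransform_asymptoticNhds (hT : AEStronglyMeasurable T μ) {δ : E}
    (hδ : ¬ ∀ᵐ ω ∂μ, ⟪T ω, δ⟫ ≤ 0) :
    Tendsto (laplaceTransform T μ) (AffineSpace.asymptoticNhds ℝ E δ) (𝓝 ⊤) := by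
  have : (AffineSpace.asymptoticNhds ℝ E δ).IsCountablyGenerated := by
    rw [AffineSpace.asymptoticNhds_eq_smul, ← map₂_smul, ← map_prod_eq_map₂]
    infer_instance
  set S : Set Ω := {ω | 0 < ⟪T ω, δ⟫}
  have hS : NullMeasurableSet S μ :=
    nullMeasurableSet_lt aemeasurable_const (hT.inner aestronglyMeasurable_const).aemeasurable
  have hμS : μ S ≠ 0 := by simpa only [ae_iff, not_le] using hδ
  refine tendsto_of_le_liminf_of_limsup_le ?_ le_top
  calc (⊤ : ℝ≥0∞)
      = ∫⁻ ω, S.indicator (fun _ => ⊤) ω ∂μ := by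
        rw [lintegral_indicator_const₀ hS, ENNReal.top_mul hμS]
    _ ≤ ∫⁻ ω, liminf (fun θ => ENNReal.ofReal (exp ⟪T ω, θ⟫))
          (AffineSpace.asymptoticNhds ℝ E δ) ∂μ :=
        lintegral_mono <| indicator_le fun ω hω =>
          (tendsto_ofReal_exp_inner_asymptoticNhds hω).liminf_eq.ge
    _ ≤ liminf (laplaceTransform T μ) (AffineSpace.asymptoticNhds ℝ E δ) :=
        lintegral_liminf_le' (aemeasurable_ofReal_exp_inner hT)

theorem ae_inner_nonpos_of_mem_asymptoticCone_sublevel (hT : AEStronglyMeasurable T μ) {M : ℝ≥0∞}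
    (hM : M < ⊤) {δ : E} (hδ : δ ∈ asymptoticCone ℝ {θ | laplaceTransform T μ θ ≤ M}) :
    ∀ᵐ ω ∂μ, ⟪T ω, δ⟫ ≤ 0 := by
  by_contra hrec
  obtain ⟨θ, hθ, hθ'⟩ := (hδ.and_eventually
    ((tendsto_laplaceTransform_asymptoticNhds hT hrec).eventually_const_lt hM)).exists
  exact hθ.not_gt hθ'

theorem exists_forall_laplaceTransform_le_iff [FiniteDimensional ℝ E]
    (hT : AEStronglyMeasurable T μ) (hfin : ∃ θ, laplaceTransform T μ θ < ⊤) :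
    (∃ θ, ∀ η, laplaceTransform T μ θ ≤ laplaceTransform T μ η) ↔
      ∀ δ, (∀ᵐ ω ∂μ, ⟪T ω, δ⟫ ≤ 0) → ∀ᵐ ω ∂μ, ⟪T ω, δ⟫ = 0 := by
  obtain ⟨θ₀, hθ₀⟩ := hfin
  constructor
  · rintro ⟨θ, hθ⟩ δ hδ
    exact mem_constancySpace_of_laplaceTransform_le_add hT ((hθ θ₀).trans_lt hθ₀) hδ (hθ _)
  · intro hrec
    exact exists_forall_le_of_asymptoticCone_subset (lowerSemicontinuous_laplaceTransform hT)
      (N := constancySpace T μ) (fun θ _ => laplaceTransform_add_of_mem_constancySpace θ)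
      fun δ hδ => hrec δ (ae_inner_nonpos_of_mem_asymptoticCone_sublevel hT hθ₀ hδ)

theorem laplaceTransform_sub_const (y θ : E) :
    laplaceTransform (fun ω => T ω - y) μ θ =
      ENNReal.ofReal (exp (-⟪y, θ⟫)) * laplaceTransform T μ θ := by
  rw [laplaceTransform, laplaceTransform, ← lintegral_const_mul' _ _ ENNReal.ofReal_ne_top]
  refine lintegral_congr fun ω => ?_
  rw [← ENNReal.ofReal_mul (exp_nonneg _), ← exp_add, inner_sub_left, sub_eq_neg_add]

theorem laplaceTransform_sub_const_lt_top_iff (y : E) {θ : E} :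
    laplaceTransform (fun ω => T ω - y) μ θ < ⊤ ↔ laplaceTransform T μ θ < ⊤ := by
  simp [laplaceTransform_sub_const, lt_top_iff_ne_top, ENNReal.mul_eq_top, exp_pos]

theorem logLikelihood_eq_neg_log (hμ : μ ≠ 0) (hT : AEStronglyMeasurable T μ) (y : E) {θ : E}
    (hθ : laplaceTransform T μ θ < ⊤) :
    logLikelihood T μ y θ = -log (laplaceTransform (fun ω => T ω - y) μ θ).toReal := by
  have hpos := ENNReal.toReal_pos (laplaceTransform_ne_zero hμ hT θ) hθ.ne
  rw [logLikelihood, laplaceTransform_sub_const, ENNReal.toReal_mul,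
    ENNReal.toReal_ofReal (exp_nonneg _), log_mul (exp_ne_zero _) hpos.ne', log_exp]
  ring

theorem logLikelihood_le_logLikelihood_iff (hμ : μ ≠ 0) (hT : AEStronglyMeasurable T μ) (y : E)
    {θ η : E} (hθ : laplaceTransform T μ θ < ⊤) (hη : laplaceTransform T μ η < ⊤) :
    logLikelihood T μ y θ ≤ logLikelihood T μ y η ↔
      laplaceTransform (fun ω => T ω - y) μ η ≤ laplaceTransform (fun ω => T ω - y) μ θ := by
  have hne (ζ : E) : laplaceTransform (fun ω => T ω - y) μ ζ ≠ 0 :=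
    laplaceTransform_ne_zero hμ (hT.sub aestronglyMeasurable_const) ζ
  have hθ' := ((laplaceTransform_sub_const_lt_top_iff y).2 hθ).ne
  have hη' := ((laplaceTransform_sub_const_lt_top_iff y).2 hη).ne
  rw [logLikelihood_eq_neg_log hμ hT y hθ, logLikelihood_eq_neg_log hμ hT y hη, neg_le_neg_iff,
    log_le_log_iff (ENNReal.toReal_pos (hne η) hη') (ENNReal.toReal_pos (hne θ) hθ'),
    ENNReal.toReal_le_toReal hη' hθ']

theorem exists_forall_logLikelihood_le_iff (hμ : μ ≠ 0) (hT : AEStronglyMeasurable T μ)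
    (hfin : ∃ θ, laplaceTransform T μ θ < ⊤) (y : E) :
    (∃ θhat, laplaceTransform T μ θhat < ⊤ ∧ ∀ θ, laplaceTransform T μ θ < ⊤ →
        logLikelihood T μ y θ ≤ logLikelihood T μ y θhat) ↔
      ∃ θhat, ∀ θ, laplaceTransform (fun ω => T ω - y) μ θhat ≤
        laplaceTransform (fun ω => T ω - y) μ θ := by
  constructor
  · rintro ⟨θhat, hθhat, hmax⟩
    refine ⟨θhat, fun θ => ?_⟩
    obtain hθ | hθ := lt_or_ge (laplaceTransform (fun ω => T ω - y) μ θ) ⊤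
    · rw [laplaceTransform_sub_const_lt_top_iff] at hθ
      exact (logLikelihood_le_logLikelihood_iff hμ hT y hθ hθhat).1 (hmax θ hθ)
    · exact le_top.trans hθ
  · rintro ⟨θhat, hmin⟩
    obtain ⟨θ₀, hθ₀⟩ := hfin
    have hθhat : laplaceTransform T μ θhat < ⊤ := (laplaceTransform_sub_const_lt_top_iff y).1 <|
      (hmin θ₀).trans_lt ((laplaceTransform_sub_const_lt_top_iff y).2 hθ₀)
    exact ⟨θhat, hθhat, fun θ hθ =>
      (logLikelihood_le_logLikelihood_iff hμ hT y hθ hθhat).2 (hmin θ)⟩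

theorem mle_exists_iff_recession_imp_constancy_general [FiniteDimensional ℝ E] (hμ : μ ≠ 0)
    (hT : AEStronglyMeasurable T μ) (hΘ : ∃ θ, laplaceTransform T μ θ < ⊤) (y : E) :
    (∃ θhat, laplaceTransform T μ θhat < ⊤ ∧ ∀ θ, laplaceTransform T μ θ < ⊤ →
        logLikelihood T μ y θ ≤ logLikelihood T μ y θhat) ↔
      ∀ δ, (∀ᵐ ω ∂μ, ⟪T ω - y, δ⟫ ≤ 0) → ∀ᵐ ω ∂μ, ⟪T ω - y, δ⟫ = 0 :=
  (exists_forall_logLikelihood_le_iff hμ hT hΘ y).trans <|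
    exists_forall_laplaceTransform_le_iff (hT.sub aestronglyMeasurable_const) <|
      hΘ.imp fun _ => (laplaceTransform_sub_const_lt_top_iff y).2

end LaplaceTransform

/-- For `y` in the convex support, the log likelihood `θ ↦ ⟪y, θ⟫ − c(θ)` attains its
supremum over the natural parameter space iff every direction of recession is a direction of
constancy. -/
theorem mle_exists_iff_recession_imp_constancy {p : ℕ} (hp : 0 < p)
    (ν : Measure (EuclideanSpace ℝ (Fin p))) [SigmaFinite ν] (hν : ν ≠ 0)
    (hΘ : {θ : EuclideanSpace ℝ (Fin p) | partitionFn ν θ < ⊤}.Nonempty)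
    (K : Set (EuclideanSpace ℝ (Fin p))) (hK : IsConvexSupport ν K)
    (y : EuclideanSpace ℝ (Fin p)) (hy : y ∈ K) :
    (∃ θhat : EuclideanSpace ℝ (Fin p), partitionFn ν θhat < ⊤ ∧
        ∀ θ : EuclideanSpace ℝ (Fin p), partitionFn ν θ < ⊤ →
          ⟪y, θ⟫ - cumulant ν θ ≤ ⟪y, θhat⟫ - cumulant ν θhat) ↔
      ∀ δ : EuclideanSpace ℝ (Fin p),
        (∀ᵐ x ∂ν, ⟪x - y, δ⟫ ≤ 0) → (∀ᵐ x ∂ν, ⟪x - y, δ⟫ = 0) :=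
  mle_exists_iff_recession_imp_constancy_general hν aestronglyMeasurable_id hΘ y
end

section
/- Let y ∈ ℝ^p and let δ ∈ ℝ^p be a direction of recession that is not a direction of constancy, i.e. ⟨x − y, δ⟩ ≤ 0 for ν-almost every x but it is not the case that ⟨x − y, δ⟩ = 0 for ν-almost every x. Then for every θ ∈ Θ the function s ↦ ⟨y, θ + sδ⟩ − c(θ + sδ) is strictly increasing on the interval {s ∈ ℝ : c(θ + sδ) < ∞}. -/
open MeasureTheory Real Filter Topology Set
open scoped RealInnerProductSpace ENNReal

/-!
The log-likelihood at `η` is `⟨y, η⟩ - log ∫ exp⟨x, η⟩ dν = -log ∫ exp⟨x - y, η⟩ dν`. Along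
`η = θ + s • δ` the exponent `⟨x - y, θ⟩ + s ⟨x - y, δ⟩` is nonincreasing in `s` for almost every
`x`, and decreasing on a set of positive measure, so the integral strictly decreases wherever it
is finite.
-/

section IntegralExp

variable {Ω : Type*} {mΩ : MeasurableSpace Ω} {μ : Measure Ω} {f g : Ω → ℝ}

theorem integral_exp_lt_integral_exp (hf : Integrable (fun ω => exp (f ω)) μ)
    (hg : Integrable (fun ω => exp (g ω)) μ) (hle : f ≤ᵐ[μ] g) (hne : ¬f =ᵐ[μ] g) :
    ∫ ω, exp (f ω) ∂μ < ∫ ω, exp (g ω) ∂μ := by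
  have hexp_le : (fun ω => exp (f ω)) ≤ᵐ[μ] fun ω => exp (g ω) :=
    hle.mono fun _ => exp_le_exp.mpr
  refine (integral_mono_ae hf hg hexp_le).lt_of_ne fun heq => hne ?_
  exact ((integral_eq_iff_of_ae_le hf hg hexp_le).mp heq).mono fun _ h => exp_injective h

theorem log_integral_exp_sub_const [NeZero μ] (hf : Integrable (fun ω => exp (f ω)) μ) (c : ℝ) :
    log (∫ ω, exp (f ω - c) ∂μ) = log (∫ ω, exp (f ω) ∂μ) - c := by
  simp_rw [exp_sub, integral_div]
  rw [log_div (integral_exp_pos hf).ne' (exp_pos c).ne', log_exp]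

theorem strictAntiOn_log_integral_exp_add_mul (hg : ∀ᵐ ω ∂μ, g ω ≤ 0)
    (hg_ne : ¬∀ᵐ ω ∂μ, g ω = 0) :
    StrictAntiOn (fun s : ℝ => log (∫ ω, exp (f ω + s * g ω) ∂μ))
      {s | Integrable (fun ω => exp (f ω + s * g ω)) μ} := by
  intro a ha b hb hab
  have : NeZero μ := ⟨fun hμ => hg_ne (by simp [hμ])⟩
  refine log_lt_log (integral_exp_pos hb) (integral_exp_lt_integral_exp hb ha ?_ fun heq => ?_)
  · filter_upwards [hg] with ω hω
    gcongr f ω + ?_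
    exact mul_le_mul_of_nonpos_right hab.le hω
  · refine hg_ne (heq.mono fun ω hω => ?_)
    exact (mul_eq_mul_right_iff.mp (add_left_cancel hω)).resolve_left hab.ne'

end IntegralExp

/-- `E` holds the canonical statistic, `F` the natural parameter, and `B` is their pairing. -/
theorem loglik_strictMonoOn_of_recession_not_constancy_general {E F : Type*}
    [AddCommGroup E] [Module ℝ E] [MeasurableSpace E] [AddCommGroup F] [Module ℝ F]
    (B : E →ₗ[ℝ] F →ₗ[ℝ] ℝ) {ν : Measure E} {y : E} {δ : F}
    (hrec : ∀ᵐ x ∂ν, B (x - y) δ ≤ 0) (hncon : ¬∀ᵐ x ∂ν, B (x - y) δ = 0) (θ : F) :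
    StrictMonoOn (fun s : ℝ => B y (θ + s • δ) - log (∫ x, exp (B x (θ + s • δ)) ∂ν))
      {s | Integrable (fun x => exp (B x (θ + s • δ))) ν} := by
  have : NeZero ν := ⟨fun hν => hncon (by simp [hν])⟩
  have hexponent (s : ℝ) (x : E) :
      B (x - y) θ + s * B (x - y) δ = B x (θ + s • δ) - B y (θ + s • δ) := by
    simp only [map_sub, map_add, map_smul, LinearMap.sub_apply, smul_eq_mul]
    ring
  have hintegrable {s : ℝ} (hs : Integrable (fun x => exp (B x (θ + s • δ))) ν) :
      Integrable (fun x => exp (B (x - y) θ + s * B (x - y) δ)) ν := by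
    simpa only [hexponent, exp_sub] using hs.div_const _
  have hloglik {s : ℝ} (hs : Integrable (fun x => exp (B x (θ + s • δ))) ν) :
      B y (θ + s • δ) - log (∫ x, exp (B x (θ + s • δ)) ∂ν) =
        -log (∫ x, exp (B (x - y) θ + s * B (x - y) δ) ∂ν) := by
    simp_rw [hexponent, log_integral_exp_sub_const hs, neg_sub]
  refine StrictMonoOn.congr (fun a ha b hb hab => ?_) fun s hs => (hloglik hs).symm
  exact neg_lt_neg (strictAntiOn_log_integral_exp_add_mul hrec hncon
    (hintegrable ha) (hintegrable hb) hab)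

section PartitionFn

variable {p : ℕ} (ν : Measure (EuclideanSpace ℝ (Fin p))) (θ : EuclideanSpace ℝ (Fin p))

theorem partitionFn_lt_top_iff_integrable :
    partitionFn ν θ < ⊤ ↔ Integrable (fun x => exp ⟪x, θ⟫) ν := by
  rw [partitionFn, lt_top_iff_ne_top]
  exact lintegral_ofReal_ne_top_iff_integrable (by fun_prop) (ae_of_all _ fun _ => (exp_pos _).le)

theorem cumulant_eq_log_integral : cumulant ν θ = log (∫ x, exp ⟪x, θ⟫ ∂ν) := by
  rw [cumulant, partitionFn,
    integral_eq_lintegral_of_nonneg_ae (ae_of_all _ fun _ => (exp_pos _).le) (by fun_prop)]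

end PartitionFn

/-- If `δ` is a direction of recession that is not a direction of constancy, then for every
`θ` in the natural parameter space, `s ↦ ⟪y, θ + sδ⟫ − c(θ + sδ)` is strictly increasing on
the interval where `c(θ + sδ)` is finite. -/
theorem loglik_strictMonoOn_of_recession_not_constancy {p : ℕ} (hp : 0 < p)
    (ν : Measure (EuclideanSpace ℝ (Fin p))) [SigmaFinite ν] (hν : ν ≠ 0)
    (hΘ : {θ : EuclideanSpace ℝ (Fin p) | partitionFn ν θ < ⊤}.Nonempty)
    (y δ : EuclideanSpace ℝ (Fin p))
    (hrec : ∀ᵐ x ∂ν, ⟪x - y, δ⟫ ≤ 0)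
    (hncon : ¬ ∀ᵐ x ∂ν, ⟪x - y, δ⟫ = 0) :
    ∀ θ : EuclideanSpace ℝ (Fin p), partitionFn ν θ < ⊤ →
      StrictMonoOn (fun s : ℝ => ⟪y, θ + s • δ⟫ - cumulant ν (θ + s • δ))
        {s : ℝ | partitionFn ν (θ + s • δ) < ⊤} := by
  intro θ _
  simpa only [partitionFn_lt_top_iff_integrable, cumulant_eq_log_integral, innerₗ_apply_apply] using
    loglik_strictMonoOn_of_recession_not_constancy_general (innerₗ _) hrec hncon θ
end
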